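/- Let 𝒞_1,…,𝒞_r be nonempty concept classes over pairwise disjoint finite domains 𝒳_1,…,𝒳_r, and let 𝒞 = 𝒞_1 ∪ … ∪ 𝒞_r be regarded as a concept class over the domain 𝒳_1 ∪ … ∪ 𝒳_r. Then max_{i=1,…,r} RTD(𝒞_i) ≤ RTD(𝒞) ≤ 1 + max_{i=1,…,r} RTD(𝒞_i). -/

import Mathlib

open scoped Classical

noncomputable section

/-! ### Concept classes, VC-dimension, teaching dimension, RTD -/

variable {X : Type*}

/-- A set `S` is shattered by the concept class `𝒞` if every subset of `S`
is the trace on `S` of some concept in `𝒞`. -/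
def Shatters [DecidableEq X] (𝒞 : Finset (Finset X)) (S : Finset X) : Prop :=
  ∀ S' ⊆ S, ∃ C ∈ 𝒞, C ∩ S = S'

/-- The VC-dimension of a concept class: the maximum size of a shattered set. -/
def VCD [DecidableEq X] (𝒞 : Finset (Finset X)) : ℕ :=
  sSup {n | ∃ S : Finset X, Shatters 𝒞 S ∧ S.card = n}

/-- `D` is a teaching set for the concept `C` within the class `𝒞`:
no other concept of `𝒞` agrees with `C` on all of `D`. -/
def IsTeachingSet [DecidableEq X] (𝒞 : Finset (Finset X)) (C D : Finset X) : Prop :=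
  ∀ C' ∈ 𝒞, C' ≠ C → ∃ x ∈ D, ¬ ((x ∈ C') ↔ (x ∈ C))

/-- The teaching dimension of the concept `C` within the class `𝒞`:
the minimum size of a teaching set for `C` in `𝒞`. -/
def TD [DecidableEq X] (𝒞 : Finset (Finset X)) (C : Finset X) : ℕ :=
  sInf {n | ∃ D : Finset X, IsTeachingSet 𝒞 C D ∧ D.card = n}

/-- The minimum teaching dimension over all concepts of the class. -/
def TDmin [DecidableEq X] (𝒞 : Finset (Finset X)) : ℕ :=
  sInf {n | ∃ C ∈ 𝒞, TD 𝒞 C = n}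

/-- The recursive teaching dimension: with `𝒞_min` the set of concepts of `𝒞` whose
teaching dimension equals `TDmin 𝒞`, we have `RTD 𝒞 = TDmin 𝒞` if `𝒞 = 𝒞_min`
and `RTD 𝒞 = max (TDmin 𝒞) (RTD (𝒞 \ 𝒞_min))` otherwise. -/
def RTD [DecidableEq X] (𝒞 : Finset (Finset X)) : ℕ :=
  if h : 𝒞 = 𝒞.filter (fun C => TD 𝒞 C = TDmin 𝒞) then TDmin 𝒞
  else max (TDmin 𝒞) (RTD (𝒞 \ 𝒞.filter (fun C => TD 𝒞 C = TDmin 𝒞)))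
termination_by 𝒞.card
decreasing_by
  have hne : 𝒞.Nonempty := by
    rcases Finset.eq_empty_or_nonempty 𝒞 with he | hne
    · exact absurd (by simp [he]) h
    · exact hne
  obtain ⟨C₀, hC₀⟩ := hne
  have hmem : TDmin 𝒞 ∈ {n | ∃ C ∈ 𝒞, TD 𝒞 C = n} :=
    Nat.sInf_mem ⟨TD 𝒞 C₀, C₀, hC₀, rfl⟩
  obtain ⟨C, hC, hTD⟩ := hmem
  refine Finset.card_lt_card ?_
  refine (Finset.ssubset_iff_of_subset Finset.sdiff_subset).mpr ?_
  exact ⟨C, hC, by simp [Finset.mem_sdiff, Finset.mem_filter, hC, hTD]⟩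

/-! ### Graph-theoretic notions -/

/-- The degree of a vertex in a graph on a finite vertex type. -/
def deg {W : Type*} [Fintype W] (T : SimpleGraph W) (v : W) : ℕ :=
  (Finset.univ.filter (fun w => T.Adj v w)).card

/-- A leaf of a graph (in particular, of a tree) is a vertex of degree 1. -/
def IsLeaf {W : Type*} [Fintype W] (T : SimpleGraph W) (v : W) : Prop :=
  deg T v = 1

/-- The number of leaves of a graph (in particular, of a tree). -/
def leafCount {W : Type*} [Fintype W] (T : SimpleGraph W) : ℕ :=
  (Finset.univ.filter (fun v => IsLeaf T v)).card

variable {V : Type*} [Fintype V] [DecidableEq V]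

/-- The open neighborhood of a vertex, as a finset. -/
def nbrFinset (G : SimpleGraph V) (x : V) : Finset V :=
  Finset.univ.filter (fun y => G.Adj x y)

/-- The closed neighborhood of a vertex, as a finset. -/
def closedNbr (G : SimpleGraph V) (x : V) : Finset V :=
  insert x (nbrFinset G x)

/-- The maximum degree `Δ(G)`. -/
def maxDeg (G : SimpleGraph V) : ℕ :=
  Finset.univ.sup (deg G)

/-- The closed neighborhood of a set of vertices. -/
def closedNbrSet (G : SimpleGraph V) (A : Finset V) : Finset V :=
  A.biUnion (closedNbr G)

/-- The open neighborhood of a set of vertices: `N_G(A) \ A`. -/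
def openNbrSet (G : SimpleGraph V) (A : Finset V) : Finset V :=
  closedNbrSet G A \ A

/-- The star class of `G`: all sets `{x} ∪ X` with `X` a set of neighbors of `x`. -/
def Cstar (G : SimpleGraph V) : Finset (Finset V) :=
  Finset.univ.filter (fun C => ∃ x : V, ∃ Y ⊆ nbrFinset G x, C = insert x Y)

/-- `A` is a connected set of `G`: the induced subgraph `G[A]` is connected. -/
def IsConnSet (G : SimpleGraph V) (A : Finset V) : Prop :=
  (G.induce (A : Set V)).Connected

/-- The class of connected sets of `G` (including the empty set). -/
def Ccon (G : SimpleGraph V) : Finset (Finset V) :=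
  Finset.univ.filter (fun A => A = ∅ ∨ IsConnSet G A)

/-- For connected `G`: the maximum number of leaves over all spanning trees of `G`. -/
def ell (G : SimpleGraph V) : ℕ :=
  sSup {k | ∃ T : SimpleGraph V, T ≤ G ∧ T.IsTree ∧ leafCount T = k}

/-- For a general graph `G`: the maximum of `ell` over the connected components of `G`. -/
def ellGen (G : SimpleGraph V) : ℕ :=
  sSup {k | ∃ c : G.ConnectedComponent, ell (G.induce c.supp) = k}

/-- Every pair of distinct elements of `L` can be connected by a path in `G` which
contains neither `u` nor any element of `L` other than the two endpoints. -/
def ConnectableAvoiding (G : SimpleGraph V) (L : Set V) (u : V) : Prop :=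
  ∀ a ∈ L, ∀ b ∈ L, a ≠ b → ∃ p : G.Walk a b, p.IsPath ∧
    ∀ v ∈ p.support, v ≠ u ∧ (v ∈ L → v = a ∨ v = b)

end

theorem td_spec {X : Type*} [Fintype X] [DecidableEq X] (𝒞 : Finset (Finset X)) (C : Finset X) :
    ∃ D : Finset X, IsTeachingSet 𝒞 C D ∧ D.card = TD 𝒞 C := by
  have h : ∃ n, n ∈ {n | ∃ D : Finset X, IsTeachingSet 𝒞 C D ∧ D.card = n} := by
    refine ⟨_, Finset.univ, ?_, rfl⟩
    intro C' _ hne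
    by_contra hcon
    push Not at hcon
    exact hne (Finset.ext fun x => hcon x (Finset.mem_univ x))
  exact Nat.sInf_mem h

theorem td_le {X : Type*} [DecidableEq X] {𝒞 : Finset (Finset X)} {C D : Finset X}
    (h : IsTeachingSet 𝒞 C D) : TD 𝒞 C ≤ D.card :=
  Nat.sInf_le ⟨D, h, rfl⟩

theorem exists_teach {X : Type*} [Fintype X] [DecidableEq X] (n : ℕ) :
    ∀ (𝒞 F : Finset (Finset X)), 𝒞.card ≤ n → F ⊆ 𝒞 → F.Nonempty →
      ∃ C ∈ F, ∃ D : Finset X, IsTeachingSet F C D ∧ D.card ≤ RTD 𝒞 := by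
  induction n with
  | zero =>
    intro 𝒞 F hn hF hne
    obtain ⟨C, hC⟩ := hne
    have := Finset.card_pos.mpr ⟨C, hF hC⟩
    omega
  | succ n ih =>
    intro 𝒞 F hn hF hne
    by_cases hex : ∃ C ∈ F, TD 𝒞 C = TDmin 𝒞
    · obtain ⟨C, hC, hTD⟩ := hex
      obtain ⟨D, hD, hc⟩ := td_spec 𝒞 C
      refine ⟨C, hC, D, fun C' hC' => hD C' (hF hC'), ?_⟩
      rw [hc, hTD, RTD]
      split_ifs
      · exact le_rfl
      · exact le_max_left _ _
    · push Not at hex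
      have hFs : F ⊆ 𝒞 \ 𝒞.filter (fun C => TD 𝒞 C = TDmin 𝒞) := by
        intro C hC
        simp [hF hC, hex C hC]
      have hcard : (𝒞 \ 𝒞.filter (fun C => TD 𝒞 C = TDmin 𝒞)).card ≤ n := by
        obtain ⟨C₀, hC₀⟩ := hne
        obtain ⟨C, hC, hTD⟩ : TDmin 𝒞 ∈ {n | ∃ C ∈ 𝒞, TD 𝒞 C = n} :=
          Nat.sInf_mem ⟨TD 𝒞 C₀, C₀, hF hC₀, rfl⟩
        have : (𝒞 \ 𝒞.filter (fun C => TD 𝒞 C = TDmin 𝒞)).card < 𝒞.card := by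
          refine Finset.card_lt_card ?_
          refine (Finset.ssubset_iff_of_subset Finset.sdiff_subset).mpr ?_
          exact ⟨C, hC, by simp [hC, hTD]⟩
        omega
      obtain ⟨C, hC, D, hD, hc⟩ := ih _ F hcard hFs hne
      refine ⟨C, hC, D, hD, hc.trans ?_⟩
      conv_rhs => rw [RTD]
      split_ifs with h
      · obtain ⟨C₀, hC₀⟩ := hne
        have h1 := hF hC₀
        rw [h] at h1
        exact absurd (Finset.mem_filter.mp h1).2 (hex C₀ hC₀)
      · exact le_max_right _ _

theorem tdmin_empty {X : Type*} [DecidableEq X] : TDmin (∅ : Finset (Finset X)) = 0 := by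
  simp [TDmin]

theorem tdmin_le {X : Type*} [DecidableEq X] (𝒞 : Finset (Finset X)) (k : ℕ)
    (h : ∀ F ⊆ 𝒞, F.Nonempty → ∃ C ∈ F, ∃ D : Finset X, IsTeachingSet F C D ∧ D.card ≤ k) :
    TDmin 𝒞 ≤ k := by
  rcases Finset.eq_empty_or_nonempty 𝒞 with he | hne
  · subst he
    simp [tdmin_empty]
  · obtain ⟨C, hC, D, hD, hc⟩ := h 𝒞 (Finset.Subset.refl _) hne
    have h1 : TDmin 𝒞 ≤ TD 𝒞 C := Nat.sInf_le ⟨C, hC, rfl⟩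
    exact h1.trans ((td_le hD).trans hc)

theorem rtd_le {X : Type*} [DecidableEq X] (𝒞 : Finset (Finset X)) (k : ℕ)
    (h : ∀ F ⊆ 𝒞, F.Nonempty → ∃ C ∈ F, ∃ D : Finset X, IsTeachingSet F C D ∧ D.card ≤ k) :
    RTD 𝒞 ≤ k := by
  induction 𝒞 using RTD.induct with
  | case1 𝒞 h1 =>
    rw [RTD, dif_pos h1]
    exact tdmin_le 𝒞 k h
  | case2 𝒞 h1 ih =>
    rw [RTD, dif_neg h1]
    exact max_le (tdmin_le 𝒞 k h) (ih fun F hF => h F (hF.trans Finset.sdiff_subset))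

/-- If `𝒞_1, …, 𝒞_r` are nonempty concept classes over pairwise
disjoint finite domains `𝒳_1, …, 𝒳_r`, then
`max_i RTD(𝒞_i) ≤ RTD(𝒞_1 ∪ … ∪ 𝒞_r) ≤ 1 + max_i RTD(𝒞_i)`. -/
theorem rtd_union_disjoint {X : Type*} [Fintype X] [DecidableEq X]
    {r : ℕ} (hr : 1 ≤ r)
    (𝒳 : Fin r → Finset X) (𝒞 : Fin r → Finset (Finset X))
    (hne : ∀ i, (𝒞 i).Nonempty)
    (hdisj : ∀ i j, i ≠ j → Disjoint (𝒳 i) (𝒳 j))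
    (hdom : ∀ i, ∀ C ∈ 𝒞 i, C ⊆ 𝒳 i) :
    Finset.univ.sup (fun i => RTD (𝒞 i)) ≤ RTD (Finset.univ.biUnion 𝒞) ∧
      RTD (Finset.univ.biUnion 𝒞) ≤ 1 + Finset.univ.sup (fun i => RTD (𝒞 i)) := by
  constructor
  · refine Finset.sup_le fun i _ => rtd_le _ _ fun F hF hFne => ?_
    exact exists_teach _ _ F le_rfl
      (hF.trans (Finset.subset_biUnion_of_mem 𝒞 (Finset.mem_univ i))) hFne
  · refine rtd_le _ _ fun F hF hFne => ?_
    by_cases hex : ∃ C ∈ F, C ≠ ∅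
    · obtain ⟨C₀, hC₀, hC₀ne⟩ := hex
      obtain ⟨i, -, hi⟩ := Finset.mem_biUnion.mp (hF hC₀)
      obtain ⟨C, hC, D, hD, hc⟩ := exists_teach _ (𝒞 i) (F.filter fun C => C ∈ 𝒞 i ∧ C ≠ ∅)
        le_rfl (fun C hC => (Finset.mem_filter.mp hC).2.1)
        ⟨C₀, Finset.mem_filter.mpr ⟨hC₀, hi, hC₀ne⟩⟩
      obtain ⟨hCF, hCi, hCne⟩ := Finset.mem_filter.mp hC
      obtain ⟨x, hx⟩ := Finset.nonempty_iff_ne_empty.mpr hCne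
      refine ⟨C, hCF, insert x D, ?_, ?_⟩
      · intro C' hC' hne'
        by_cases hx' : x ∈ C'
        · obtain ⟨j, -, hj⟩ := Finset.mem_biUnion.mp (hF hC')
          have hji : j = i := by
            by_contra hji
            exact Finset.disjoint_left.mp (hdisj j i hji) (hdom j C' hj hx') (hdom i C hCi hx)
          subst hji
          obtain ⟨y, hy, hy'⟩ := hD C' (Finset.mem_filter.mpr
            ⟨hC', hj, Finset.nonempty_iff_ne_empty.mp ⟨x, hx'⟩⟩) hne'
          exact ⟨y, Finset.mem_insert_of_mem hy, hy'⟩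
        · exact ⟨x, Finset.mem_insert_self x D, fun hiff => hx' (hiff.mpr hx)⟩
      · have h1 : RTD (𝒞 i) ≤ Finset.univ.sup (fun i => RTD (𝒞 i)) :=
          Finset.le_sup (f := fun i => RTD (𝒞 i)) (Finset.mem_univ i)
        have h2 := Finset.card_insert_le x D
        omega
    · push Not at hex
      obtain ⟨C, hC⟩ := hFne
      refine ⟨C, hC, ∅, ?_, by simp⟩
      intro C' hC' hne'
      exact absurd ((hex C' hC').trans (hex C hC).symm) hne'
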